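/- Holomorphic–antiholomorphic conservation relation at the level of cycles: fix n ≥ 2. Then Asym( (−1)^{n−1}·ē₁·e₁·Π·∏_{a=1}^{n−1} A_a^{2a−1} − e₁²·∏_{a=1}^{n−1} A_a^{2a+1} ) ∈ K. -/

import Mathlib

open Finset Equiv

/-- The polynomial ring `ℂ[A₁,…,A_{n−1}, B₁,…,B_{2n}]`. -/
abbrev PolyRing (n : ℕ) := MvPolynomial (Fin (n - 1) ⊕ Fin (2 * n)) ℂ

/-- The field `F = ℂ(A₁,…,A_{n−1}, B₁,…,B_{2n})` of rational functions. -/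
abbrev RatField (n : ℕ) := FractionRing (PolyRing n)

/-- The variable `A_a` (indexed from `0`) inside `F`. -/
noncomputable def Av (n : ℕ) (a : Fin (n - 1)) : RatField n :=
  algebraMap (PolyRing n) (RatField n) (MvPolynomial.X (Sum.inl a))

/-- The variable `B_j` (indexed from `0`) inside `F`. -/
noncomputable def Bv (n : ℕ) (j : Fin (2 * n)) : RatField n :=
  algebraMap (PolyRing n) (RatField n) (MvPolynomial.X (Sum.inr j))

/-- The field automorphism of `F` substituting `A_a ↦ A_{σ(a)}` (fixing the `B`'s). -/
noncomputable def permA (n : ℕ) (σ : Equiv.Perm (Fin (n - 1))) :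
    RatField n ≃+* RatField n :=
  IsFractionRing.ringEquivOfRingEquiv
    ((MvPolynomial.renameEquiv ℂ (Equiv.sumCongr σ (Equiv.refl (Fin (2 * n))))).toRingEquiv)

/-- Antisymmetrization over the `A`-variables:
`Asym f := ∑_{σ ∈ S_{n−1}} sgn(σ)·f(A_{σ(1)},…,A_{σ(n−1)})`. -/
noncomputable def Asym (n : ℕ) (x : RatField n) : RatField n :=
  ∑ σ : Equiv.Perm (Fin (n - 1)), ((Equiv.Perm.sign σ : ℤ) : RatField n) * permA n σ x

/-- `Θ̂₊(x) := ∏_{j=1}^{2n}(1 + x·B_j⁻¹)`. -/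
noncomputable def ThetaP (n : ℕ) (x : RatField n) : RatField n :=
  ∏ j, (1 + x * (Bv n j)⁻¹)

/-- `Θ̂₋(x) := ∏_{j=1}^{2n}(1 − x·B_j⁻¹)`. -/
noncomputable def ThetaM (n : ℕ) (x : RatField n) : RatField n :=
  ∏ j, (1 - x * (Bv n j)⁻¹)

/-- `Ξ̂¹(x) := Θ̂₊(x) − Θ̂₋(x)`. -/
noncomputable def Xi1 (n : ℕ) (x : RatField n) : RatField n :=
  ThetaP n x - ThetaM n x

/-- `Ξ̂²(x,y) := (Θ̂₊(x)Θ̂₊(y) − Θ̂₋(x)Θ̂₋(y))·(x−y)/(x+y) + Θ̂₊(x)Θ̂₋(y) − Θ̂₋(x)Θ̂₊(y)`. -/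
noncomputable def Xi2 (n : ℕ) (x y : RatField n) : RatField n :=
  (ThetaP n x * ThetaP n y - ThetaM n x * ThetaM n y) * (x - y) / (x + y) +
    ThetaP n x * ThetaM n y - ThetaM n x * ThetaP n y

/-- The subfield `𝔹 = ℂ(B₁,…,B_{2n}) ⊆ F`. -/
noncomputable def BField (n : ℕ) : Subfield (RatField n) :=
  Subfield.closure
    (Set.range (fun c : ℂ => algebraMap (PolyRing n) (RatField n) (MvPolynomial.C c)) ∪
      Set.range (Bv n))

/-- The `𝔹`-submodule `K ⊆ F` spanned by the antisymmetrized deformed cycles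
`Asym(Ξ̂¹(A₁)·∏_{a=2}^{n−1} A_a^{r_a})` and
`Asym(Ξ̂²(A₁,A₂)·∏_{a=3}^{n−1} A_a^{r_a})` with `0 ≤ r_a ≤ 2n−1`. -/
noncomputable def Kspan (n : ℕ) : Submodule (BField n) (RatField n) :=
  Submodule.span (BField n)
    ({x | ∃ (h : 0 < n - 1) (r : Fin (n - 1) → ℕ), (∀ a, r a ≤ 2 * n - 1) ∧
        x = Asym n (Xi1 n (Av n ⟨0, h⟩) *
          ∏ a ∈ Finset.univ.filter (fun a : Fin (n - 1) => 0 < (a : ℕ)),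
            (Av n a) ^ (r a))} ∪
     {x | ∃ (h : 1 < n - 1) (r : Fin (n - 1) → ℕ), (∀ a, r a ≤ 2 * n - 1) ∧
        x = Asym n (Xi2 n (Av n ⟨0, by omega⟩) (Av n ⟨1, h⟩) *
          ∏ a ∈ Finset.univ.filter (fun a : Fin (n - 1) => 1 < (a : ℕ)),
            (Av n a) ^ (r a))})

/-- `e₁ = ∑_j B_j`. -/
noncomputable def eOne (n : ℕ) : RatField n := ∑ j, Bv n j

/-- `ē₁ = ∑_j B_j⁻¹`. -/
noncomputable def eBarOne (n : ℕ) : RatField n := ∑ j, (Bv n j)⁻¹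

/-- `Π = ∏_j B_j`. -/
noncomputable def PiB (n : ℕ) : RatField n := ∏ j, Bv n j

/-- The cycle `G_{μν} = (ē₁ − (−1)^ν·e₁)·((−1)^{μ+n}·Π·∏_{a=1}^{n−1} A_a^{2a−1}
  + ∏_{a=1}^{n−1} A_a^{2a+1})` of the energy–momentum tensor. -/
noncomputable def Gcyc (n : ℕ) (μ ν : Fin 2) : RatField n :=
  (eBarOne n - (-1 : RatField n) ^ (ν : ℕ) * eOne n) *
    ((-1 : RatField n) ^ ((μ : ℕ) + n) * PiB n *
        (∏ a : Fin (n - 1), (Av n a) ^ (2 * (a : ℕ) + 1)) +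
      ∏ a : Fin (n - 1), (Av n a) ^ (2 * (a : ℕ) + 3))

lemma permA_Av (n : ℕ) (σ : Equiv.Perm (Fin (n - 1))) (a : Fin (n - 1)) :
    permA n σ (Av n a) = Av n (σ a) := by
  unfold permA Av
  rw [IsFractionRing.ringEquivOfRingEquiv_algebraMap]
  congr 1
  exact MvPolynomial.rename_X _ _

lemma permA_Bv (n : ℕ) (σ : Equiv.Perm (Fin (n - 1))) (j : Fin (2 * n)) :
    permA n σ (Bv n j) = Bv n j := by
  unfold permA Bv
  rw [IsFractionRing.ringEquivOfRingEquiv_algebraMap]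
  congr 1
  exact MvPolynomial.rename_X _ _

lemma Bv_ne (n : ℕ) (j : Fin (2 * n)) : Bv n j ≠ 0 := by
  unfold Bv
  intro h
  rw [IsFractionRing.to_map_eq_zero_iff] at h
  exact MvPolynomial.X_ne_zero _ h

lemma Asym_smul (n : ℕ) (c x : RatField n) (hc : ∀ σ, permA n σ c = c) :
    Asym n (c * x) = c * Asym n x := by
  unfold Asym
  rw [Finset.mul_sum]
  refine Finset.sum_congr rfl fun σ _ => ?_
  rw [map_mul, hc]; ring

lemma Asym_sum (n : ℕ) {ι : Type*} (s : Finset ι) (f : ι → RatField n) :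
    Asym n (∑ i ∈ s, f i) = ∑ i ∈ s, Asym n (f i) := by
  unfold Asym
  rw [Finset.sum_comm]
  refine Finset.sum_congr rfl fun σ _ => ?_
  rw [map_sum, Finset.mul_sum]

lemma Asym_sub (n : ℕ) (x y : RatField n) :
    Asym n (x - y) = Asym n x - Asym n y := by
  unfold Asym
  rw [← Finset.sum_sub_distrib]
  refine Finset.sum_congr rfl fun σ _ => ?_
  rw [map_sub]; ring

lemma Asym_mono (n : ℕ) (r : Fin (n - 1) → ℕ) :
    Asym n (∏ a, Av n a ^ r a) = (Matrix.of fun i a => Av n i ^ r a).det := by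
  unfold Asym
  rw [Matrix.det_apply']
  refine Finset.sum_congr rfl fun σ _ => ?_
  rw [map_prod]
  congr 1
  refine Finset.prod_congr rfl fun a _ => ?_
  rw [map_pow, permA_Av]; rfl

lemma det_rot {R : Type*} [CommRing R] (m : ℕ) (A : Fin (m + 1) → R) (r : Fin (m + 1) → ℕ) :
    (Matrix.of fun i a => A i ^ r (finRotate (m + 1) a)).det
      = (-1) ^ m * (Matrix.of fun i a => A i ^ r a).det := by
  have := Matrix.det_permute' (finRotate (m + 1)) (Matrix.of fun i a => A i ^ r a)
  rw [sign_finRotate] at this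
  simpa [Matrix.submatrix] using this

lemma Xi1_expand (n : ℕ) (x : RatField n) :
    Xi1 n x = ∑ k ∈ range (2 * n + 1),
      ((1 - (-1) ^ k) * ∑ t ∈ powersetCard k (univ : Finset (Fin (2 * n))), ∏ j ∈ t, (Bv n j)⁻¹)
        * x ^ k := by
  have h1 : ∀ y : RatField n, ∏ j, (1 + y * (Bv n j)⁻¹) = ∑ k ∈ range (2 * n + 1),
      (∑ t ∈ powersetCard k (univ : Finset (Fin (2 * n))), ∏ j ∈ t, (Bv n j)⁻¹) * y ^ k := by
    intro y
    rw [Finset.prod_one_add, Finset.sum_powerset]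
    simp only [card_univ, Fintype.card_fin]
    refine Finset.sum_congr rfl fun k _ => ?_
    rw [Finset.sum_mul]
    refine Finset.sum_congr rfl fun t ht => ?_
    rw [Finset.prod_mul_distrib, Finset.prod_const, (mem_powersetCard.1 ht).2, mul_comm]
  have h2 : ThetaM n x = ∏ j, (1 + (-x) * (Bv n j)⁻¹) := by
    unfold ThetaM
    refine Finset.prod_congr rfl fun j _ => ?_
    ring
  unfold Xi1
  rw [h2, h1 (-x)]
  unfold ThetaP
  rw [h1 x, ← Finset.sum_sub_distrib]
  refine Finset.sum_congr rfl fun k _ => ?_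
  rw [neg_pow]; ring

lemma s_one (n : ℕ) :
    ∑ t ∈ powersetCard 1 (univ : Finset (Fin (2 * n))), ∏ j ∈ t, (Bv n j)⁻¹ = eBarOne n := by
  rw [powersetCard_one]
  simp [eBarOne]

lemma s_top (n : ℕ) (hn : 1 ≤ n) :
    PiB n * ∑ t ∈ powersetCard (2 * n - 1) (univ : Finset (Fin (2 * n))), ∏ j ∈ t, (Bv n j)⁻¹
      = eOne n := by
  have h : powersetCard (2 * n - 1) (univ : Finset (Fin (2 * n)))
      = univ.image (fun j : Fin (2 * n) => ({j} : Finset (Fin (2 * n)))ᶜ) := by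
    ext t
    simp only [mem_powersetCard, subset_univ, true_and, mem_image, mem_univ]
    constructor
    · intro ht
      have : tᶜ.card = 1 := by rw [card_compl, ht, Fintype.card_fin]; omega
      obtain ⟨j, hj⟩ := card_eq_one.1 this
      exact ⟨j, by rw [← hj, compl_compl]⟩
    · rintro ⟨j, rfl⟩
      rw [card_compl, Fintype.card_fin, card_singleton]
  rw [h, Finset.sum_image, Finset.mul_sum]
  · unfold eOne
    refine Finset.sum_congr rfl fun j _ => ?_
    unfold PiB
    rw [← Finset.prod_mul_prod_compl {j} (Bv n), mul_assoc, ← Finset.prod_mul_distrib,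
      prod_singleton]
    have : ∏ i ∈ ({j} : Finset (Fin (2 * n)))ᶜ, (Bv n i * (Bv n i)⁻¹) = 1 :=
      Finset.prod_eq_one fun i _ => mul_inv_cancel₀ (Bv_ne n i)
    rw [this, mul_one]
  · intro a _ b _ hab
    simpa using hab

lemma permA_s (n k : ℕ) (σ : Equiv.Perm (Fin (n - 1))) :
    permA n σ ((1 - (-1) ^ k) * ∑ t ∈ powersetCard k (univ : Finset (Fin (2 * n))),
      ∏ j ∈ t, (Bv n j)⁻¹) = (1 - (-1) ^ k) *
      ∑ t ∈ powersetCard k (univ : Finset (Fin (2 * n))), ∏ j ∈ t, (Bv n j)⁻¹ := by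
  simp [permA_Bv]

lemma gen_eq (m : ℕ) :
    Asym (m + 2) (Xi1 (m + 2) (Av (m + 2) (0 : Fin (m + 1))) *
      ∏ a ∈ Finset.univ.filter (fun a : Fin (m + 1) => 0 < (a : ℕ)),
        Av (m + 2) a ^ (2 * (a : ℕ) + 1)) * PiB (m + 2)
    = 2 * (eBarOne (m + 2) * PiB (m + 2) *
        Asym (m + 2) (∏ a : Fin (m + 1), Av (m + 2) a ^ (2 * (a : ℕ) + 1)) +
       eOne (m + 2) * (-1) ^ m *
        Asym (m + 2) (∏ a : Fin (m + 1), Av (m + 2) a ^ (2 * (a : ℕ) + 3))) := by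
  set A : Fin (m + 1) → RatField (m + 2) := Av (m + 2) with hA
  set r : ℕ → Fin (m + 1) → ℕ := fun k a => if a = 0 then k else 2 * (a : ℕ) + 1 with hr
  set D : ℕ → RatField (m + 2) := fun k => (Matrix.of fun i a => A i ^ r k a).det with hD
  set s : ℕ → RatField (m + 2) := fun k => ∑ t ∈ powersetCard k (univ : Finset (Fin (2 * (m + 2)))),
    ∏ j ∈ t, (Bv (m + 2) j)⁻¹ with hs
  have hmono : ∀ k, A 0 ^ k * ∏ a ∈ Finset.univ.filter (fun a : Fin (m + 1) => 0 < (a : ℕ)),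
      A a ^ (2 * (a : ℕ) + 1) = ∏ a, A a ^ r k a := by
    intro k
    have hf : Finset.univ.filter (fun a : Fin (m + 1) => 0 < (a : ℕ)) = univ.erase 0 := by
      ext a
      rw [mem_filter, mem_erase, Ne, Fin.ext_iff, Nat.pos_iff_ne_zero]
      exact and_comm
    rw [hf, ← Finset.mul_prod_erase univ _ (mem_univ (0 : Fin (m + 1)))]
    congr 1
    refine Finset.prod_congr rfl fun a ha => ?_
    simp [hr, (mem_erase.1 ha).1]
  have key : Asym (m + 2) (Xi1 (m + 2) (A 0) *
      ∏ a ∈ Finset.univ.filter (fun a : Fin (m + 1) => 0 < (a : ℕ)), A a ^ (2 * (a : ℕ) + 1))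
      = ∑ k ∈ range (2 * (m + 2) + 1), ((1 - (-1) ^ k) * s k) * D k := by
    rw [Xi1_expand, Finset.sum_mul, Asym_sum]
    refine Finset.sum_congr rfl fun k _ => ?_
    rw [mul_assoc, hmono, Asym_smul _ _ _ (permA_s (m + 2) k)]
    congr 1
    exact Asym_mono (m + 2) (r k)
  have hz : ∀ k ∈ range (2 * (m + 2) + 1), k ∉ ({1, 2 * m + 3} : Finset ℕ) →
      ((1 - (-1) ^ k) * s k) * D k = 0 := by
    intro k hk hk'
    rcases Nat.even_or_odd k with he | ⟨i, hi⟩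
    · simp [he.neg_one_pow]
    · simp only [mem_insert, mem_singleton, not_or, mem_range] at hk hk'
      have : D k = 0 := by
        have hi1 : i < m + 1 := by omega
        have hne : (0 : Fin (m + 1)) ≠ ⟨i, hi1⟩ := by
          intro h
          have := congrArg Fin.val h
          simp at this
          omega
        refine Matrix.det_zero_of_column_eq hne fun j => ?_
        simp [hr, hne.symm, hi]
      rw [this, mul_zero]
  have hsub : ({1, 2 * m + 3} : Finset ℕ) ⊆ range (2 * (m + 2) + 1) := by
    intro k hk
    simp only [mem_insert, mem_singleton, mem_range] at hk ⊢
    omega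
  have hD1 : Asym (m + 2) (∏ a : Fin (m + 1), A a ^ (2 * (a : ℕ) + 1)) = D 1 := by
    rw [show D 1 = Asym (m + 2) (∏ a, A a ^ r 1 a) from (Asym_mono (m + 2) (r 1)).symm]
    congr 1
    refine Finset.prod_congr rfl fun a _ => ?_
    by_cases h : a = 0
    · simp [hr, h]
    · simp [hr, h]
  have hD2 : Asym (m + 2) (∏ a : Fin (m + 1), A a ^ (2 * (a : ℕ) + 3))
      = (-1) ^ m * D (2 * m + 3) := by
    rw [hD, ← det_rot]
    refine Eq.trans (Asym_mono (m + 2) (fun a : Fin (m + 1) => 2 * (a : ℕ) + 3)) ?_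
    congr 1
    ext i a
    simp only [Matrix.of_apply]
    congr 1
    by_cases h : a = Fin.last m
    · subst h
      simp [hr]
    · have hv : (finRotate (m + 1) a : ℕ) = a + 1 := coe_finRotate_of_ne_last h
      have h0 : finRotate (m + 1) a ≠ 0 := by
        intro h'
        rw [h'] at hv
        simp at hv
      simp only [hr, if_neg h0, hv]
      ring
  rw [key, ← Finset.sum_subset hsub hz, Finset.sum_pair (by omega), hD1, hD2]
  have h1 : s 1 = eBarOne (m + 2) := s_one (m + 2)
  have h2 : PiB (m + 2) * s (2 * m + 3) = eOne (m + 2) := s_top (m + 2) (by omega)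
  have h3 : (-1 : RatField (m + 2)) ^ (2 * m + 3) = -1 := Odd.neg_one_pow ⟨m + 1, by ring⟩
  have h4 : (-1 : RatField (m + 2)) ^ m * (-1) ^ m = 1 := by
    rw [← mul_pow]; simp
  rw [h1, h3, ← h2]
  linear_combination (-2 * PiB (m + 2) * s (2 * m + 3) * D (2 * m + 3)) * h4

lemma Bv_mem (n : ℕ) (j : Fin (2 * n)) : Bv n j ∈ BField n :=
  Subfield.subset_closure (Or.inr ⟨j, rfl⟩)

/-- Holomorphic–antiholomorphic conservation relation at the level of cycles:
for `n ≥ 2`,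
`Asym((−1)^{n−1}·ē₁·e₁·Π·∏_{a=1}^{n−1} A_a^{2a−1} − e₁²·∏_{a=1}^{n−1} A_a^{2a+1}) ∈ K`. -/
theorem holo_antiholo_conservation (n : ℕ) (hn : 2 ≤ n) :
    Asym n ((-1 : RatField n) ^ (n - 1) * eBarOne n * eOne n * PiB n *
        (∏ a : Fin (n - 1), (Av n a) ^ (2 * (a : ℕ) + 1)) -
      (eOne n) ^ 2 * ∏ a : Fin (n - 1), (Av n a) ^ (2 * (a : ℕ) + 3)) ∈ Kspan n := by
  obtain ⟨m, rfl⟩ : ∃ m, n = m + 2 := ⟨n - 2, by omega⟩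
  have hg := gen_eq m
  have he : eOne (m + 2) ∈ BField (m + 2) := sum_mem fun j _ => Bv_mem _ j
  have hp : PiB (m + 2) ∈ BField (m + 2) := prod_mem fun j _ => Bv_mem _ j
  have hc : (-1) ^ (m + 1) * eOne (m + 2) * PiB (m + 2) * 2⁻¹ ∈ BField (m + 2) := by
    refine mul_mem (mul_mem (mul_mem (pow_mem (neg_mem (one_mem _)) _) he) hp) (inv_mem ?_)
    exact ofNat_mem _ 2
  have hgen : Asym (m + 2) (Xi1 (m + 2) (Av (m + 2) (0 : Fin (m + 1))) *
      ∏ a ∈ Finset.univ.filter (fun a : Fin (m + 1) => 0 < (a : ℕ)),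
        Av (m + 2) a ^ (2 * (a : ℕ) + 1)) ∈ Kspan (m + 2) := by
    refine Submodule.subset_span (Or.inl ⟨Nat.succ_pos m, fun a => 2 * (a : ℕ) + 1, ?_, rfl⟩)
    intro a
    have := a.2
    dsimp only
    omega
  have := Submodule.smul_mem (Kspan (m + 2)) (⟨_, hc⟩ : BField (m + 2)) hgen
  convert this using 1
  rw [Subfield.smul_def, smul_eq_mul, Asym_sub, Asym_smul, Asym_smul]
  · have h2 : (2 : RatField (m + 2)) ≠ 0 := two_ne_zero
    have h4 : (-1 : RatField (m + 2)) ^ m * (-1) ^ m = 1 := by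
      rw [← mul_pow]; simp
    have h5 : (-1 : RatField (m + 2)) ^ (m + 2 - 1) = - (-1) ^ m := by
      have : (-1 : RatField (m + 2)) ^ (m + 1) = - (-1) ^ m := by rw [pow_succ]; ring
      exact this
    have h7 : (-1 : RatField (m + 2)) ^ (m + 1) = - (-1) ^ m := h5
    dsimp only
    rw [h5, h7]
    refine mul_left_cancel₀ h2 ?_
    have h6 : (2 : RatField (m + 2)) * 2⁻¹ = 1 := mul_inv_cancel₀ h2
    change 2 * (_ * Asym (m + 2) (∏ a : Fin (m + 1), Av (m + 2) a ^ (2 * (a : ℕ) + 1)) -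
      _ * Asym (m + 2) (∏ a : Fin (m + 1), Av (m + 2) a ^ (2 * (a : ℕ) + 3))) = _
    generalize Asym (m + 2) (Xi1 _ _ * _) = X at hg ⊢
    generalize Asym (m + 2) (∏ a : Fin (m + 1), Av (m + 2) a ^ (2 * (a : ℕ) + 3)) = Y at hg ⊢
    linear_combination ((-1) ^ m * eOne (m + 2)) * hg
      + ((-1) ^ m * eOne (m + 2) * PiB (m + 2) * X) * h6
      + (2 * eOne (m + 2) ^ 2 * Y) * h4
  · intro σ; simp [eOne, permA_Bv]
  · intro σ; simp [eOne, eBarOne, PiB, permA_Bv]
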